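/- Let f:[0,∞)→ℝ be continuous and bounded. Then for every integer n ≥ 2 and every x ≥ 0 with B̃_n((t−x)²;x) > 0, |B̃_n(f;x) − f(x)| ≤ 2·ω(f; √(B̃_n((t−x)²;x))), where B̃_n((t−x)²;x) denotes the operator applied to t ↦ (t−x)² and ω is the usual modulus of continuity. -/

import Mathlib

open Real MeasureTheory Filter Topology

/-- `p_n(x) = n² x² T(1) + n x U(1) + V(1)`. -/
noncomputable def pnx (T U V : ℝ → ℝ) (n : ℕ) (x : ℝ) : ℝ :=
  (n : ℝ) ^ 2 * x ^ 2 * T 1 + (n : ℝ) * x * U 1 + V 1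

/-- The Euler Beta function value `B(j, n+1) = Γ(j)Γ(n+1)/Γ(j+n+1)`. -/
noncomputable def betaB (j n : ℕ) : ℝ :=
  Real.Gamma (j : ℝ) * Real.Gamma ((n : ℝ) + 1) / Real.Gamma ((j : ℝ) + (n : ℝ) + 1)

/-- The Baskakov–Durrmeyer type operator `B̃_n(f;x)`. -/
noncomputable def BDop (ξ S T U V : ℝ → ℝ) (Θ : ℕ → ℝ → ℝ) (n : ℕ) (f : ℝ → ℝ) (x : ℝ) : ℝ :=
  (S 1 * ξ (pnx T U V n x))⁻¹ *
    (Θ 0 ((n : ℝ) * x) * f 0 +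
      ∑' j : ℕ, (Θ (j + 1) ((n : ℝ) * x) / betaB (j + 1) n) *
        ∫ s in Set.Ioi (0 : ℝ), s ^ j * (1 + s) ^ (-((n : ℝ) + (j : ℝ) + 2)) * f s)

/-- The usual modulus of continuity of `f` on `[0,∞)`. -/
noncomputable def modCont (f : ℝ → ℝ) (δ : ℝ) : ℝ :=
  sSup {d : ℝ | ∃ x y : ℝ, 0 ≤ x ∧ 0 ≤ y ∧ |x - y| ≤ δ ∧ d = |f x - f y|}

/-!
The operator is integration against a probability measure on `[0, ∞)`: since
`s ^ (j - 1) (1 + s) ^ (-(n + j + 1)) / B(j, n + 1)` is the density of the beta prime distribution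
with parameters `(j, n + 1)` and `∑ Θ_j(nx) = S(1) ξ(p_n(x))`, the map `f ↦ B̃_n(f; x)` is the
expectation under a mixture of the Dirac mass at `0` and of these laws. Finiteness of its second
moment comes from the convergence of the generating series beyond `s = 1`. The estimate is then
that of Shisha and Mond: integrate `|f(t) - f(x)| ≤ (1 + (t - x)² / δ²) ω(f; δ)` and take for `δ²`
the second moment about `x`.
-/

theorem natFloor_le_sq {a : ℝ} (ha : 0 ≤ a) : (⌊a⌋₊ : ℝ) ≤ a ^ 2 := by
  rcases lt_or_ge a 1 with ha1 | ha1
  · simp [Nat.floor_eq_zero.2 ha1, sq_nonneg]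
  · exact (Nat.floor_le ha).trans (le_self_pow₀ ha1 two_ne_zero)

theorem summable_mul_natCast_pow_of_one_lt {c : ℕ → ℝ} {r : ℝ} (hr : 1 < r)
    (hc : Summable fun j => c j * r ^ j) (k : ℕ) : Summable fun j => c j * (j : ℝ) ^ k :=
  summable_of_isBigO_nat hc ((Asymptotics.isBigO_refl c atTop).mul
    (isLittleO_pow_const_const_pow_of_one_lt k hr).isBigO)

section ModulusOfContinuity

variable {f : ℝ → ℝ} {δ x y : ℝ}

theorem modCont_nonneg (f : ℝ → ℝ) (δ : ℝ) : 0 ≤ modCont f δ := by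
  refine Real.sSup_nonneg ?_
  rintro _ ⟨x, y, -, -, -, rfl⟩
  exact abs_nonneg _

theorem abs_sub_le_modCont (hf : ∃ M : ℝ, ∀ t : ℝ, 0 ≤ t → |f t| ≤ M) (hx : 0 ≤ x) (hy : 0 ≤ y)
    (hxy : |x - y| ≤ δ) : |f x - f y| ≤ modCont f δ := by
  obtain ⟨M, hM⟩ := hf
  refine le_csSup ⟨M + M, ?_⟩ ⟨x, y, hx, hy, hxy, rfl⟩
  rintro _ ⟨a, b, ha, hb, -, rfl⟩
  exact (abs_sub _ _).trans (add_le_add (hM a ha) (hM b hb))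

theorem abs_sub_le_natCast_mul_modCont (hf : ∃ M : ℝ, ∀ t : ℝ, 0 ≤ t → |f t| ≤ M) {N : ℕ}
    (hN : 0 < N) (hx : 0 ≤ x) (hy : 0 ≤ y) (hxy : |x - y| ≤ N * δ) :
    |f x - f y| ≤ N * modCont f δ := by
  have hN' : (0 : ℝ) < N := by exact_mod_cast hN
  let z (i : ℕ) : ℝ := AffineMap.lineMap x y ((i : ℝ) / N)
  have hz {i : ℕ} (hi : i ≤ N) : 0 ≤ z i :=
    (convex_Ici (0 : ℝ)).lineMap_mem hx hy
      ⟨by positivity, (div_le_one hN').2 (by exact_mod_cast hi)⟩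
  have hstep (i : ℕ) : |z i - z (i + 1)| ≤ δ := by
    have hdist : dist ((i : ℝ) / N) ((i + 1 : ℕ) / N) = (N : ℝ)⁻¹ := by
      rw [Real.dist_eq, ← sub_div, abs_div, abs_of_pos hN']
      simp
    rw [← Real.dist_eq, dist_lineMap_lineMap, hdist, Real.dist_eq]
    exact (inv_mul_le_iff₀ hN').2 hxy
  have hchain := dist_le_range_sum_of_dist_le (f := f ∘ z) N (d := fun _ => modCont f δ)
    fun hi => abs_sub_le_modCont hf (hz hi.le) (hz hi) (hstep _)
  simpa [z, hN'.ne', Real.dist_eq] using hchain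

theorem abs_sub_le_one_add_sq_div_mul_modCont (hf : ∃ M : ℝ, ∀ t : ℝ, 0 ≤ t → |f t| ≤ M)
    (hδ : 0 < δ) (hx : 0 ≤ x) (hy : 0 ≤ y) :
    |f x - f y| ≤ (1 + (x - y) ^ 2 / δ ^ 2) * modCont f δ := by
  have hxy : |x - y| ≤ ((⌊|x - y| / δ⌋₊ + 1 : ℕ) : ℝ) * δ := by
    rw [← div_le_iff₀ hδ]
    exact_mod_cast (Nat.lt_floor_add_one _).le
  refine (abs_sub_le_natCast_mul_modCont hf (Nat.succ_pos _) hx hy hxy).trans ?_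
  gcongr
  · exact modCont_nonneg f δ
  · rw [← sq_abs (x - y), ← div_pow]
    push_cast
    linarith [natFloor_le_sq (a := |x - y| / δ) (by positivity)]

end ModulusOfContinuity

section ShishaMond

variable {μ : Measure ℝ} [IsProbabilityMeasure μ] {f : ℝ → ℝ} {x : ℝ}

theorem abs_integral_sub_le_one_add_div_mul_modCont (hμ : ∀ᵐ t ∂μ, 0 ≤ t)
    (hf : ∃ M : ℝ, ∀ t : ℝ, 0 ≤ t → |f t| ≤ M) (hfi : Integrable f μ)
    (hsq : Integrable (fun t => (t - x) ^ 2) μ) (hx : 0 ≤ x) {δ : ℝ} (hδ : 0 < δ) :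
    |∫ t, f t ∂μ - f x| ≤ (1 + (∫ t, (t - x) ^ 2 ∂μ) / δ ^ 2) * modCont f δ := by
  have hbound : Integrable (fun t => (1 + (t - x) ^ 2 / δ ^ 2) * modCont f δ) μ :=
    ((integrable_const 1).add (hsq.div_const _)).mul_const _
  calc |∫ t, f t ∂μ - f x| = ‖∫ t, (f t - f x) ∂μ‖ := by
        rw [integral_sub hfi (integrable_const _), integral_const, probReal_univ, one_smul,
          Real.norm_eq_abs]
    _ ≤ ∫ t, (1 + (t - x) ^ 2 / δ ^ 2) * modCont f δ ∂μ := by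
        refine norm_integral_le_of_norm_le hbound (hμ.mono fun t ht => ?_)
        exact abs_sub_le_one_add_sq_div_mul_modCont hf hδ ht hx
    _ = (1 + (∫ t, (t - x) ^ 2 ∂μ) / δ ^ 2) * modCont f δ := by
        rw [integral_mul_const, integral_add (integrable_const _) (hsq.div_const _),
          integral_const, probReal_univ, one_smul, integral_div]

theorem integral_eq_of_integral_sub_sq_eq_zero (f : ℝ → ℝ)
    (hsq : Integrable (fun t => (t - x) ^ 2) μ) (h : ∫ t, (t - x) ^ 2 ∂μ = 0) :
    ∫ t, f t ∂μ = f x := by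
  have hae : ∀ᵐ t ∂μ, f t = f x := by
    filter_upwards [(integral_eq_zero_iff_of_nonneg (fun t => sq_nonneg (t - x)) hsq).1 h] with t ht
    rw [sub_eq_zero.1 (pow_eq_zero_iff two_ne_zero |>.1 ht)]
  rw [integral_congr_ae hae, integral_const, probReal_univ, one_smul]

theorem abs_integral_sub_le_two_mul_modCont_sqrt (hμ : ∀ᵐ t ∂μ, 0 ≤ t)
    (hf : ∃ M : ℝ, ∀ t : ℝ, 0 ≤ t → |f t| ≤ M) (hfi : Integrable f μ)
    (hsq : Integrable (fun t => (t - x) ^ 2) μ) (hx : 0 ≤ x) :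
    |∫ t, f t ∂μ - f x| ≤ 2 * modCont f √(∫ t, (t - x) ^ 2 ∂μ) := by
  have hnonneg : 0 ≤ ∫ t, (t - x) ^ 2 ∂μ := integral_nonneg fun t => sq_nonneg (t - x)
  rcases hnonneg.eq_or_lt with hzero | hpos
  · rw [integral_eq_of_integral_sub_sq_eq_zero f hsq hzero.symm, sub_self, abs_zero]
    exact mul_nonneg zero_le_two (modCont_nonneg _ _)
  · have h := abs_integral_sub_le_one_add_div_mul_modCont hμ hf hfi hsq hx (Real.sqrt_pos.2 hpos)
    rwa [Real.sq_sqrt hnonneg, div_self hpos.ne', one_add_one_eq_two] at h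

end ShishaMond

section BetaPrime

open ProbabilityTheory (beta beta_pos betaPDF betaPDFReal betaPDF_of_pos_lt_one lintegral_betaPDF
  lintegral_betaPDF_eq_one)

variable {a b : ℝ}

/-- The density on `(0, ∞)` of the beta prime distribution (beta distribution of the second kind)
with shape parameters `a` and `b`. Only its values at positive arguments are meaningful. -/
noncomputable def betaPrimePDFReal (a b t : ℝ) : ℝ :=
  t ^ (a - 1) * (1 + t) ^ (-(a + b)) / beta a b

/-- The beta prime distribution with shape parameters `a` and `b`, as a measure on `ℝ` carried by
`(0, ∞)`. -/
noncomputable def betaPrimeMeasure (a b : ℝ) : Measure ℝ :=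
  (volume.restrict (Set.Ioi 0)).withDensity fun t => ENNReal.ofReal (betaPrimePDFReal a b t)

theorem measurable_betaPrimePDFReal (a b : ℝ) : Measurable (betaPrimePDFReal a b) := by
  unfold betaPrimePDFReal
  fun_prop

theorem betaPrimePDFReal_nonneg (ha : 0 < a) (hb : 0 < b) {t : ℝ} (ht : 0 < t) :
    0 ≤ betaPrimePDFReal a b t := by
  have := beta_pos ha hb
  unfold betaPrimePDFReal
  positivity

theorem image_div_one_add_Ioi : (fun t : ℝ => t / (1 + t)) '' Set.Ioi 0 = Set.Ioo 0 1 := by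
  ext u
  constructor
  · rintro ⟨t, ht : 0 < t, rfl⟩
    exact ⟨by positivity, (div_lt_one (by positivity)).2 (by linarith)⟩
  · rintro ⟨hu0, hu1⟩
    have : 0 < 1 - u := sub_pos.2 hu1
    refine ⟨u / (1 - u), div_pos hu0 this, ?_⟩
    field_simp
    ring

theorem injOn_div_one_add_Ioi : Set.InjOn (fun t : ℝ => t / (1 + t)) (Set.Ioi 0) := by
  intro s (hs : 0 < s) t (ht : 0 < t) hst
  have := (div_eq_div_iff (by positivity) (by positivity)).1 hst
  linarith

theorem hasDerivAt_div_one_add {t : ℝ} (ht : 0 < t) :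
    HasDerivAt (fun t : ℝ => t / (1 + t)) (((1 + t) ^ 2)⁻¹) t := by
  refine ((hasDerivAt_id t).fun_div ((hasDerivAt_id t).const_add 1)
    (by positivity)).congr_deriv ?_
  simp

theorem betaPrimePDFReal_eq_inv_sq_mul_betaPDFReal (a b : ℝ) {t : ℝ} (ht : 0 < t) :
    betaPrimePDFReal a b t = ((1 + t) ^ 2)⁻¹ * betaPDFReal a b (t / (1 + t)) := by
  have ht' : 0 < 1 + t := by positivity
  have hlt : t / (1 + t) < 1 := (div_lt_one ht').2 (by linarith)
  have hsub : 1 - t / (1 + t) = (1 + t)⁻¹ := by field_simp; ring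
  have hexp : (1 + t) ^ (-(a + b)) =
      ((1 + t) ^ 2)⁻¹ * ((1 + t) ^ (a - 1))⁻¹ * ((1 + t) ^ (b - 1))⁻¹ := by
    rw [← Real.rpow_natCast, ← Real.rpow_neg ht'.le, ← Real.rpow_neg ht'.le,
      ← Real.rpow_neg ht'.le, ← Real.rpow_add ht', ← Real.rpow_add ht']
    congr 1
    push_cast
    ring
  rw [betaPrimePDFReal, betaPDFReal, if_pos ⟨by positivity, hlt⟩, hsub, hexp,
    Real.div_rpow ht.le ht'.le, Real.inv_rpow ht'.le]
  ring

theorem lintegral_betaPrimePDFReal_eq_one (ha : 0 < a) (hb : 0 < b) :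
    ∫⁻ t in Set.Ioi 0, ENNReal.ofReal (betaPrimePDFReal a b t) = 1 := by
  calc ∫⁻ t in Set.Ioi 0, ENNReal.ofReal (betaPrimePDFReal a b t)
      = ∫⁻ t in Set.Ioi 0, ENNReal.ofReal |((1 + t) ^ 2)⁻¹| * betaPDF a b (t / (1 + t)) := by
        refine setLIntegral_congr_fun measurableSet_Ioi fun t ht => ?_
        rw [betaPrimePDFReal_eq_inv_sq_mul_betaPDFReal a b ht, ENNReal.ofReal_mul (by positivity),
          abs_of_nonneg (by positivity), betaPDF]
    _ = ∫⁻ u in Set.Ioo 0 1, betaPDF a b u := by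
        rw [← image_div_one_add_Ioi, lintegral_image_eq_lintegral_abs_deriv_mul measurableSet_Ioi
          (fun t ht => (hasDerivAt_div_one_add ht).hasDerivWithinAt) injOn_div_one_add_Ioi]
    _ = 1 := by
        rw [setLIntegral_congr_fun measurableSet_Ioo
          fun u hu => betaPDF_of_pos_lt_one hu.1 hu.2, ← lintegral_betaPDF,
          lintegral_betaPDF_eq_one ha hb]

theorem isProbabilityMeasure_betaPrimeMeasure (ha : 0 < a) (hb : 0 < b) :
    IsProbabilityMeasure (betaPrimeMeasure a b) where
  measure_univ := by
    rw [betaPrimeMeasure, withDensity_apply _ MeasurableSet.univ, Measure.restrict_univ,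
      lintegral_betaPrimePDFReal_eq_one ha hb]

theorem betaPrimeMeasure_absolutelyContinuous (a b : ℝ) :
    betaPrimeMeasure a b ≪ volume.restrict (Set.Ioi 0) :=
  withDensity_absolutelyContinuous _ _

theorem integral_betaPrimeMeasure (ha : 0 < a) (hb : 0 < b) (f : ℝ → ℝ) :
    ∫ t, f t ∂betaPrimeMeasure a b = ∫ t in Set.Ioi 0, betaPrimePDFReal a b t * f t := by
  rw [betaPrimeMeasure, integral_withDensity_eq_integral_toReal_smul
    (measurable_betaPrimePDFReal a b).ennreal_ofReal (by simp)]
  refine setIntegral_congr_fun measurableSet_Ioi fun t ht => ?_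
  simp only [smul_eq_mul, ENNReal.toReal_ofReal (betaPrimePDFReal_nonneg ha hb ht)]

theorem lintegral_rpow_betaPrimeMeasure {p : ℝ} (ha : 0 < a) (hb : 0 < b) (hap : 0 < a + p)
    (hpb : 0 < b - p) :
    ∫⁻ t, ENNReal.ofReal (t ^ p) ∂betaPrimeMeasure a b =
      ENNReal.ofReal (beta (a + p) (b - p) / beta a b) := by
  have hβ := beta_pos ha hb
  have hβp := beta_pos hap hpb
  have hpdf : ∀ t ∈ Set.Ioi (0 : ℝ), betaPrimePDFReal a b t * t ^ p =
      beta (a + p) (b - p) / beta a b * betaPrimePDFReal (a + p) (b - p) t := by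
    intro t (ht : 0 < t)
    have hexp : t ^ (a + p - 1) = t ^ (a - 1) * t ^ p := by
      rw [← Real.rpow_add ht]
      congr 1
      ring
    rw [betaPrimePDFReal, betaPrimePDFReal, hexp, add_add_sub_cancel]
    field_simp
  rw [betaPrimeMeasure, lintegral_withDensity_eq_lintegral_mul _
    (measurable_betaPrimePDFReal a b).ennreal_ofReal (by fun_prop)]
  calc ∫⁻ t in Set.Ioi 0, ENNReal.ofReal (betaPrimePDFReal a b t) * ENNReal.ofReal (t ^ p)
      = ∫⁻ t in Set.Ioi 0, ENNReal.ofReal (beta (a + p) (b - p) / beta a b) *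
          ENNReal.ofReal (betaPrimePDFReal (a + p) (b - p) t) := by
        refine setLIntegral_congr_fun measurableSet_Ioi fun t ht => ?_
        rw [← ENNReal.ofReal_mul (betaPrimePDFReal_nonneg ha hb ht), hpdf t ht,
          ENNReal.ofReal_mul (by positivity)]
    _ = ENNReal.ofReal (beta (a + p) (b - p) / beta a b) := by
        rw [lintegral_const_mul _ (measurable_betaPrimePDFReal _ _).ennreal_ofReal,
          lintegral_betaPrimePDFReal_eq_one hap hpb, mul_one]

theorem beta_add_two_sub_two_div_beta (ha : 0 < a) (hb : 2 < b) :
    beta (a + 2) (b - 2) / beta a b = a * (a + 1) / ((b - 1) * (b - 2)) := by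
  have hΓa : Real.Gamma (a + 2) = (a + 1) * (a * Real.Gamma a) := by
    rw [← Real.Gamma_add_one ha.ne', ← Real.Gamma_add_one (by positivity)]
    ring_nf
  have hΓb : Real.Gamma b = (b - 1) * ((b - 2) * Real.Gamma (b - 2)) := by
    rw [← Real.Gamma_add_one (by linarith), show b - 2 + 1 = b - 1 by ring,
      ← Real.Gamma_add_one (by linarith), sub_add_cancel]
  have h1 : 0 < b - 1 := by linarith
  have h2 : 0 < b - 2 := by linarith
  have hΓa_pos := Real.Gamma_pos_of_pos ha
  have hΓb_pos := Real.Gamma_pos_of_pos h2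
  have hΓab_pos := Real.Gamma_pos_of_pos (show 0 < a + b by linarith)
  rw [beta, beta, add_add_sub_cancel, hΓa, hΓb]
  field_simp

theorem lintegral_sq_betaPrimeMeasure (ha : 0 < a) (hb : 2 < b) :
    ∫⁻ t, ENNReal.ofReal (t ^ 2) ∂betaPrimeMeasure a b =
      ENNReal.ofReal (a * (a + 1) / ((b - 1) * (b - 2))) := by
  rw [← beta_add_two_sub_two_div_beta ha hb, ← lintegral_rpow_betaPrimeMeasure ha
    (by linarith) (by linarith) (by linarith)]
  simp only [Real.rpow_two]

end BetaPrime

section DurrmeyerMeasure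

variable {n : ℕ} {c : ℕ → ℝ} {f : ℝ → ℝ}

/-- The law attached to the index `j` of the Baskakov–Durrmeyer operator of order `n`: the Dirac
mass at `0` for `j = 0` and the beta prime distribution with parameters `(j, n + 1)` for `j ≥ 1`. -/
noncomputable def durrmeyerKernel (n : ℕ) : ℕ → Measure ℝ
  | 0 => Measure.dirac 0
  | j + 1 => betaPrimeMeasure (j + 1) (n + 1)

/-- The mixture of the laws `durrmeyerKernel n j` with weights `c j`; the operator is integration
against it when `c j = Θ_j(nx) / (S(1) ξ(p_n(x)))`. Negative weights are replaced by `0`. -/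
noncomputable def durrmeyerMeasure (c : ℕ → ℝ) (n : ℕ) : Measure ℝ :=
  Measure.sum fun j => ENNReal.ofReal (c j) • durrmeyerKernel n j

theorem isProbabilityMeasure_durrmeyerKernel (n j : ℕ) :
    IsProbabilityMeasure (durrmeyerKernel n j) := by
  cases j with
  | zero => exact Measure.dirac.isProbabilityMeasure
  | succ j => exact isProbabilityMeasure_betaPrimeMeasure (by positivity) (by positivity)

theorem ae_nonneg_durrmeyerKernel (n j : ℕ) : ∀ᵐ t ∂durrmeyerKernel n j, 0 ≤ t := by
  cases j with
  | zero => simp [durrmeyerKernel]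
  | succ j =>
    refine (betaPrimeMeasure_absolutelyContinuous _ _).ae_le ?_
    exact (ae_restrict_mem measurableSet_Ioi).mono fun t ht => le_of_lt ht

theorem aestronglyMeasurable_durrmeyerKernel
    (hf : AEStronglyMeasurable f (volume.restrict (Set.Ioi 0))) (n j : ℕ) :
    AEStronglyMeasurable f (durrmeyerKernel n j) := by
  cases j with
  | zero => exact aestronglyMeasurable_dirac
  | succ j => exact hf.mono_ac (betaPrimeMeasure_absolutelyContinuous _ _)

theorem lintegral_sq_durrmeyerKernel (hn : 2 ≤ n) (j : ℕ) :
    ∫⁻ t, ENNReal.ofReal (t ^ 2) ∂durrmeyerKernel n j =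
      ENNReal.ofReal (j * (j + 1) / (n * (n - 1))) := by
  cases j with
  | zero => simp [durrmeyerKernel]
  | succ j =>
    have hn' : (2 : ℝ) ≤ n := by exact_mod_cast hn
    rw [durrmeyerKernel, lintegral_sq_betaPrimeMeasure (by positivity) (by linarith)]
    congr 2
    · push_cast
      ring
    · ring

theorem isProbabilityMeasure_durrmeyerMeasure (hc : ∀ j, 0 ≤ c j) (hsum : HasSum c 1) (n : ℕ) :
    IsProbabilityMeasure (durrmeyerMeasure c n) where
  measure_univ := by
    have := isProbabilityMeasure_durrmeyerKernel n
    simp only [durrmeyerMeasure, Measure.sum_apply _ MeasurableSet.univ, Measure.smul_apply,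
      measure_univ, smul_eq_mul, mul_one]
    rw [← ENNReal.ofReal_tsum_of_nonneg hc hsum.summable, hsum.tsum_eq, ENNReal.ofReal_one]

theorem ae_nonneg_durrmeyerMeasure (c : ℕ → ℝ) (n : ℕ) : ∀ᵐ t ∂durrmeyerMeasure c n, 0 ≤ t :=
  Measure.ae_sum_iff.2 fun j => Measure.ae_smul_measure (ae_nonneg_durrmeyerKernel n j) _

theorem aestronglyMeasurable_durrmeyerMeasure
    (hf : AEStronglyMeasurable f (volume.restrict (Set.Ioi 0))) (c : ℕ → ℝ) (n : ℕ) :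
    AEStronglyMeasurable f (durrmeyerMeasure c n) :=
  aestronglyMeasurable_sum_measure_iff.2 fun j =>
    (aestronglyMeasurable_durrmeyerKernel hf n j).smul_measure _

theorem integrable_sq_durrmeyerMeasure (hn : 2 ≤ n) (hc : ∀ j, 0 ≤ c j)
    (hmom : Summable fun j => c j * (j : ℝ) ^ 2) :
    Integrable (fun t => t ^ 2) (durrmeyerMeasure c n) := by
  have hn' : (2 : ℝ) ≤ n := by exact_mod_cast hn
  have hle (j : ℕ) : (j * (j + 1) / (n * (n - 1)) : ℝ) ≤ (j : ℝ) ^ 2 := by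
    have hj : (j : ℝ) ≤ (j : ℝ) ^ 2 := by exact_mod_cast Nat.le_self_pow two_ne_zero j
    have hnn : (2 : ℝ) ≤ n * (n - 1) := by nlinarith
    rw [div_le_iff₀ (by linarith)]
    linarith [mul_le_mul_of_nonneg_left hnn (sq_nonneg (j : ℝ))]
  have hsummable : Summable fun j => c j * (j * (j + 1) / (n * (n - 1)) : ℝ) :=
    hmom.of_nonneg_of_le
      (fun j => mul_nonneg (hc j) (div_nonneg (by positivity) (by nlinarith)))
      (fun j => mul_le_mul_of_nonneg_left (hle j) (hc j))
  refine ⟨by fun_prop, (hasFiniteIntegral_iff_ofReal (ae_of_all _ fun t => sq_nonneg t)).2 ?_⟩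
  simp only [durrmeyerMeasure, lintegral_sum_measure, lintegral_smul_measure, smul_eq_mul,
    lintegral_sq_durrmeyerKernel hn, ← ENNReal.ofReal_mul (hc _)]
  exact hsummable.tsum_ofReal_lt_top

theorem integrable_sub_sq_durrmeyerMeasure (hn : 2 ≤ n) (hc : ∀ j, 0 ≤ c j) (hsum : HasSum c 1)
    (hmom : Summable fun j => c j * (j : ℝ) ^ 2) (x : ℝ) :
    Integrable (fun t => (t - x) ^ 2) (durrmeyerMeasure c n) := by
  have := isProbabilityMeasure_durrmeyerMeasure hc hsum n
  have hid : MemLp id 2 (durrmeyerMeasure c n) :=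
    (memLp_two_iff_integrable_sq aestronglyMeasurable_id).2
      (integrable_sq_durrmeyerMeasure hn hc hmom)
  exact (hid.sub (memLp_const x)).integrable_sq

theorem hasSum_integral_durrmeyerMeasure (hc : ∀ j, 0 ≤ c j)
    (hf : Integrable f (durrmeyerMeasure c n)) :
    HasSum (fun j => c j * ∫ t, f t ∂durrmeyerKernel n j) (∫ t, f t ∂durrmeyerMeasure c n) := by
  have hmix := hasSum_integral_measure hf
  simp only [integral_smul_measure, ENNReal.toReal_ofReal (hc _), smul_eq_mul] at hmix
  exact hmix

end DurrmeyerMeasure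

theorem betaB_eq_beta (j n : ℕ) : betaB j n = ProbabilityTheory.beta j (n + 1) := by
  rw [betaB, ProbabilityTheory.beta, add_assoc]

theorem integral_durrmeyerKernel_succ (n j : ℕ) (f : ℝ → ℝ) :
    ∫ t, f t ∂durrmeyerKernel n (j + 1) = (betaB (j + 1) n)⁻¹ *
      ∫ s in Set.Ioi (0 : ℝ), s ^ j * (1 + s) ^ (-((n : ℝ) + (j : ℝ) + 2)) * f s := by
  rw [durrmeyerKernel, integral_betaPrimeMeasure (by positivity) (by positivity),
    ← integral_const_mul, betaB_eq_beta]
  congr with s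
  have hexp : -((n : ℝ) + j + 2) = -((j + 1 : ℝ) + (n + 1)) := by ring
  rw [betaPrimePDFReal, add_sub_cancel_right, Real.rpow_natCast, hexp]
  push_cast
  ring

theorem BDop_eq_integral_durrmeyerMeasure {ξ S T U V : ℝ → ℝ} {Θ : ℕ → ℝ → ℝ} {n : ℕ} {x : ℝ}
    {f : ℝ → ℝ} (hc : ∀ j, 0 ≤ Θ j (n * x) / (S 1 * ξ (pnx T U V n x)))
    (hf : Integrable f
      (durrmeyerMeasure (fun j => Θ j (n * x) / (S 1 * ξ (pnx T U V n x))) n)) :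
    BDop ξ S T U V Θ n f x =
      ∫ t, f t ∂durrmeyerMeasure (fun j => Θ j (n * x) / (S 1 * ξ (pnx T U V n x))) n := by
  have hsum := hasSum_integral_durrmeyerMeasure hc hf
  rw [← hsum.tsum_eq, hsum.summable.tsum_eq_zero_add, BDop, mul_add, ← tsum_mul_left]
  congr 1
  · simp only [durrmeyerKernel, integral_dirac]
    ring
  · refine tsum_congr fun j => ?_
    rw [integral_durrmeyerKernel_succ]
    ring

theorem stmt14_general {ρ : ℝ} (hρ : 1 < ρ) {ξ S T U V : ℝ → ℝ} {Θ : ℕ → ℝ → ℝ} {n : ℕ}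
    (hn : 2 ≤ n) {x : ℝ} (hx : 0 ≤ x) (hΘ : ∀ j, 0 ≤ Θ j (n * x))
    (hgen : ∀ s ∈ Set.Ioo (-ρ) ρ, HasSum (fun j : ℕ => Θ j (n * x) * s ^ j)
      (S s * ξ ((n * x) ^ 2 * T s + n * x * U s + V s)))
    (hK : 0 < S 1 * ξ (pnx T U V n x)) {f : ℝ → ℝ}
    (hfm : AEStronglyMeasurable f (volume.restrict (Set.Ioi 0)))
    (hfb : ∃ M : ℝ, ∀ t : ℝ, 0 ≤ t → |f t| ≤ M) :
    |BDop ξ S T U V Θ n f x - f x| ≤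
      2 * modCont f √(BDop ξ S T U V Θ n (fun t => (t - x) ^ 2) x) := by
  set c : ℕ → ℝ := fun j => Θ j (n * x) / (S 1 * ξ (pnx T U V n x)) with hc_def
  have hc (j : ℕ) : 0 ≤ c j := div_nonneg (hΘ j) hK.le
  have hsum : HasSum c 1 := by
    have h1 := (hgen 1 ⟨by linarith, hρ⟩).div_const (S 1 * ξ (pnx T U V n x))
    simpa only [one_pow, mul_one, mul_pow, ← pnx.eq_def, div_self hK.ne'] using h1
  have hmom : Summable fun j => c j * (j : ℝ) ^ 2 := by
    obtain ⟨σ, hσ1, hσρ⟩ := exists_between hρ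
    refine summable_mul_natCast_pow_of_one_lt hσ1 ?_ 2
    simpa only [hc_def, div_mul_eq_mul_div] using
      (hgen σ ⟨by linarith, hσρ⟩).summable.div_const (S 1 * ξ (pnx T U V n x))
  have hprob := isProbabilityMeasure_durrmeyerMeasure hc hsum n
  have hnonneg := ae_nonneg_durrmeyerMeasure c n
  have hsq := integrable_sub_sq_durrmeyerMeasure hn hc hsum hmom x
  have hfi : Integrable f (durrmeyerMeasure c n) := by
    obtain ⟨M, hM⟩ := hfb
    exact .of_bound (aestronglyMeasurable_durrmeyerMeasure hfm c n) M (hnonneg.mono hM)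
  rw [BDop_eq_integral_durrmeyerMeasure hc hfi, BDop_eq_integral_durrmeyerMeasure hc hsq]
  exact abs_integral_sub_le_two_mul_modCont_sqrt hnonneg hfb hfi hsq hx

theorem stmt14
    (ρ : ℝ) (hρ : 1 < ρ)
    (ξ S T U V : ℝ → ℝ) (Θ : ℕ → ℝ → ℝ)
    (p q r u v : ℕ → ℝ)
    (hξser : ∀ t : ℝ, HasSum (fun j : ℕ => p j * t ^ j) (ξ t))
    (hξnn : ∀ t : ℝ, 0 ≤ ξ t)
    (hSser : ∀ s ∈ Set.Ioo (-ρ) ρ, HasSum (fun j : ℕ => q j * s ^ j) (S s))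
    (hTser : ∀ s ∈ Set.Ioo (-ρ) ρ, HasSum (fun j : ℕ => r j * s ^ (j + 1)) (T s))
    (hUser : ∀ s ∈ Set.Ioo (-ρ) ρ, HasSum (fun j : ℕ => u j * s ^ (j + 2)) (U s))
    (hVser : ∀ s ∈ Set.Ioo (-ρ) ρ, HasSum (fun j : ℕ => v j * s ^ (j + 3)) (V s))
    (hS1 : 0 < S 1)
    (hT'1 : deriv T 1 = 0) (hT''1 : deriv (deriv T) 1 = 0) (hU'1 : deriv U 1 = 1)
    (hΘnn : ∀ (j : ℕ) (y : ℝ), 0 ≤ y → 0 ≤ Θ j y)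
    (hgen : ∀ y : ℝ, 0 ≤ y → ∀ s ∈ Set.Ioo (-ρ) ρ,
      HasSum (fun j : ℕ => Θ j y * s ^ j) (S s * ξ (y ^ 2 * T s + y * U s + V s)))
    (hξp : ∀ (m : ℕ), 1 ≤ m → ∀ y : ℝ, 0 ≤ y → 0 < ξ (pnx T U V m y))
    (f : ℝ → ℝ) (hfc : ContinuousOn f (Set.Ici 0))
    (hfb : ∃ M : ℝ, ∀ x : ℝ, 0 ≤ x → |f x| ≤ M)
    (n : ℕ) (hn : 2 ≤ n) (x : ℝ) (hx : 0 ≤ x)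
    (hpos : 0 < BDop ξ S T U V Θ n (fun t => (t - x) ^ 2) x) :
    |BDop ξ S T U V Θ n f x - f x| ≤
      2 * modCont f (Real.sqrt (BDop ξ S T U V Θ n (fun t => (t - x) ^ 2) x)) := by
  exact stmt14_general hρ hn hx (hΘnn · _ (by positivity)) (hgen _ (by positivity))
    (mul_pos hS1 (hξp n (by omega) x hx))
    ((hfc.mono Set.Ioi_subset_Ici_self).aestronglyMeasurable measurableSet_Ioi) hfb
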